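/- arXiv:2108.05132 — 7 statements merged into one kernel-verified Lean document; each statement's English description precedes it below -/
import Mathlib

section
/- Let (X,d) be a metric space, φ : X → ℝ a function, and u ∈ X. Let Φ¹, Φ² : [0,∞) → [0,∞) be functions with Φ¹(t) > 0 for all t > 0, lim_{t→0⁺} Φ¹(t)/t = 1, and lim_{t→0⁺} Φ²(t)/t = 0. Then the local slope satisfies |∂φ|(u) ≤ sup_{v ∈ X, v ≠ u} (φ(u) − φ(v) − Φ²(d(u,v)))⁺ / Φ¹(d(u,v)), where both sides are interpreted as elements of [0,∞] and the supremum over the empty set is 0. -/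
open Filter ENNReal

/-- The local slope `|∂φ|(u) = limsup_{v → u, v ≠ u} (φ(u) − φ(v))⁺ / d(u,v)`,
with values in `[0,∞]`. -/
noncomputable def localSlope {X : Type*} [MetricSpace X] (φ : X → ℝ) (u : X) : ℝ≥0∞ :=
  Filter.limsup (fun v => ENNReal.ofReal ((φ u - φ v) / dist u v)) (nhdsWithin u {u}ᶜ)

/-!
Write `d = d(u, v)` and let `Q` be the quotient `(φ(u) − φ(v) − Φ²(d)) / Φ¹(d)`. Near `u` one has
`(φ(u) − φ(v)) / d = Q * (Φ¹(d) / d) + Φ²(d) / d`, where the factor tends to `1` and the last term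
to `0`. Hence the local slope is at most the limsup of `Q⁺` as `v → u`, and a fortiori at most its
supremum over `v ≠ u`.
-/

section Limsup

variable {α : Type*} {l : Filter α}

theorem limsup_le_biSup_of_mem {β : Type*} [CompleteLattice β] {f : α → β} {s : Set α}
    (hs : s ∈ l) : limsup f l ≤ ⨆ x ∈ s, f x :=
  limsup_eq_iInf_iSup.trans_le (iInf₂_le s hs)

theorem limsup_mul_le_of_tendsto {f g : α → ℝ≥0∞} {c : ℝ≥0∞} (hg : Tendsto g l (nhds c))
    (hc_zero : c ≠ 0) (hc_top : c ≠ ∞) : limsup (f * g) l ≤ limsup f l * c := by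
  rcases l.eq_or_neBot with rfl | _
  · simp
  · rw [← hg.limsup_eq] at hc_zero hc_top ⊢
    exact ENNReal.limsup_mul_le' (.inr hc_top) (.inr hc_zero)

theorem ofReal_div_le_ofReal_sub_div_mul_add (a q : ℝ) {d p : ℝ} (hpd : 0 < p / d) :
    ENNReal.ofReal (a / d) ≤
      ENNReal.ofReal ((a - q) / p) * ENNReal.ofReal (p / d) + ENNReal.ofReal (q / d) := by
  obtain ⟨hp, hd⟩ := div_ne_zero_iff.mp hpd.ne'
  calc
    ENNReal.ofReal (a / d) = ENNReal.ofReal ((a - q) / p * (p / d) + q / d) := by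
      congr 1
      field_simp
      ring
    _ ≤ ENNReal.ofReal ((a - q) / p * (p / d)) + ENNReal.ofReal (q / d) := ENNReal.ofReal_add_le
    _ = _ := by rw [ENNReal.ofReal_mul' hpd.le]

theorem limsup_ofReal_div_le_limsup_ofReal_sub_div_mul (a : α → ℝ) {d p q : α → ℝ} {c : ℝ}
    (hc : 0 < c) (hp : Tendsto (fun x ↦ p x / d x) l (nhds c))
    (hq : Tendsto (fun x ↦ q x / d x) l (nhds 0)) :
    limsup (fun x ↦ ENNReal.ofReal (a x / d x)) l ≤
      limsup (fun x ↦ ENNReal.ofReal ((a x - q x) / p x)) l * ENNReal.ofReal c := by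
  let quot : α → ℝ≥0∞ := fun x ↦ ENNReal.ofReal ((a x - q x) / p x)
  let ratio : α → ℝ≥0∞ := fun x ↦ ENNReal.ofReal (p x / d x)
  let error : α → ℝ≥0∞ := fun x ↦ ENNReal.ofReal (q x / d x)
  have error_tendsto : Tendsto error l (nhds 0) := by
    simpa only [ENNReal.ofReal_zero] using ENNReal.tendsto_ofReal hq
  calc
    limsup (fun x ↦ ENNReal.ofReal (a x / d x)) l ≤ limsup (quot * ratio + error) l :=
      limsup_le_limsup <| (hp.eventually_const_lt hc).mono fun x hx ↦
        ofReal_div_le_ofReal_sub_div_mul_add (a x) (q x) hx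
    _ = limsup (quot * ratio) l := ENNReal.limsup_add_of_right_tendsto_zero error_tendsto _
    _ ≤ limsup quot l * ENNReal.ofReal c :=
      limsup_mul_le_of_tendsto (ENNReal.tendsto_ofReal hp) (ENNReal.ofReal_pos.mpr hc).ne'
        ENNReal.ofReal_ne_top

end Limsup

section LocalSlope

variable {X : Type*} [MetricSpace X]

theorem tendsto_dist_nhdsNE (u : X) :
    Tendsto (dist u) (nhdsWithin u {u}ᶜ) (nhdsWithin 0 (Set.Ioi 0)) := by
  refine tendsto_nhdsWithin_iff.mpr ⟨?_, ?_⟩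
  · exact ((continuous_const.dist continuous_id).tendsto' u 0 (dist_self u)).mono_left
      nhdsWithin_le_nhds
  · filter_upwards [self_mem_nhdsWithin] with v hv using dist_pos.mpr (Ne.symm hv)

theorem stmt5_general (φ : X → ℝ) (u : X) {Φ1 Φ2 : ℝ → ℝ}
    (hΦ1lim : Tendsto (fun t ↦ Φ1 t / t) (nhdsWithin 0 (Set.Ioi 0)) (nhds 1))
    (hΦ2lim : Tendsto (fun t ↦ Φ2 t / t) (nhdsWithin 0 (Set.Ioi 0)) (nhds 0)) :
    localSlope φ u ≤
      limsup (fun v ↦ ENNReal.ofReal ((φ u - φ v - Φ2 (dist u v)) / Φ1 (dist u v)))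
        (nhdsWithin u {u}ᶜ) := by
  simpa only [localSlope, ENNReal.ofReal_one, mul_one] using
    limsup_ofReal_div_le_limsup_ofReal_sub_div_mul (fun v ↦ φ u - φ v) one_pos
      (hΦ1lim.comp (tendsto_dist_nhdsNE u)) (hΦ2lim.comp (tendsto_dist_nhdsNE u))

end LocalSlope

/-- Upper bound for the local slope by the generalized global slope: if
`Φ¹(t)/t → 1` and `Φ²(t)/t → 0` as `t → 0⁺`, then
`|∂φ|(u) ≤ sup_{v ≠ u} (φ(u) − φ(v) − Φ²(d(u,v)))⁺ / Φ¹(d(u,v))`. -/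
theorem stmt5 {X : Type*} [MetricSpace X] (φ : X → ℝ) (u : X)
    (Φ1 Φ2 : ℝ → ℝ)
    (hΦ1nonneg : ∀ t : ℝ, 0 ≤ t → 0 ≤ Φ1 t)
    (hΦ2nonneg : ∀ t : ℝ, 0 ≤ t → 0 ≤ Φ2 t)
    (hΦ1pos : ∀ t : ℝ, 0 < t → 0 < Φ1 t)
    (hΦ1lim : Tendsto (fun t => Φ1 t / t) (nhdsWithin 0 (Set.Ioi 0)) (nhds 1))
    (hΦ2lim : Tendsto (fun t => Φ2 t / t) (nhdsWithin 0 (Set.Ioi 0)) (nhds 0)) :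
    localSlope φ u ≤
      ⨆ (v : X) (_ : v ≠ u),
        ENNReal.ofReal ((φ u - φ v - Φ2 (dist u v)) / Φ1 (dist u v)) := by
  exact (stmt5_general φ u hΦ1lim hΦ2lim).trans
    (limsup_le_biSup_of_mem self_mem_nhdsWithin)
end

section
/- Let (X,d) be a metric space, φ : X → ℝ a function, M ∈ ℝ, and u ∈ X with φ(u) ≤ M. Let Φ¹, Φ² : [0,∞) → [0,∞) be functions with Φ¹(t) > 0 for all t > 0, lim_{t→0⁺} Φ¹(t)/t = 1, and lim_{t→0⁺} Φ²(t)/t = 0. Assume the following generalized convexity property: for every v ∈ X and every s ∈ [0,1] there exists a point u_s ∈ X such that d(u, u_s) ≤ s·Φ¹(d(u,v)) and φ(u_s) ≤ (1−s)·φ(u) + s·φ(v) + s·Φ²(d(u,v)). Then the local slope admits the representation |∂φ|(u) = sup_{v ∈ X, v ≠ u} (φ(u) − φ(v) − Φ²(d(u,v)))⁺ / Φ¹(d(u,v)), where both sides are interpreted as elements of [0,∞] and the supremum over the empty set is 0. -/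
open Filter ENNReal

/-!
Lower bound: moving from `u` towards `v` by a small parameter `s` costs distance at most
`s * Φ1 (dist u v)` and decreases `φ` by at least `s * (φ u - φ v - Φ2 (dist u v))`; the quotient of
the two does not depend on `s`, so it survives in the limsup as `s → 0`.

Upper bound: if the supremum `S` is finite, then `φ u - φ v ≤ S * Φ1 (dist u v) + Φ2 (dist u v)` for
every `v ≠ u`, and the right-hand side is `S * dist u v + o(dist u v)`.
-/

open Topology

section LocalSlope

variable {X : Type*} [MetricSpace X] {φ : X → ℝ} {u : X}

lemma tendsto_dist_nhdsNE_nhdsGT_zero (u : X) : Tendsto (dist u) (𝓝[≠] u) (𝓝[>] 0) := by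
  refine tendsto_nhdsWithin_iff.2 ⟨tendsto_nhdsWithin_of_tendsto_nhds ?_,
    eventually_nhdsWithin_of_forall fun v hv => dist_pos.2 (Ne.symm hv)⟩
  rw [← dist_self u]
  exact ContinuousAt.tendsto (by fun_prop)

lemma localSlope_le_of_eventually_sub_le {ω : ℝ → ℝ} {c : ℝ}
    (hω : Tendsto (fun t => ω t / t) (𝓝[>] 0) (𝓝 c))
    (hφ : ∀ᶠ v in 𝓝[≠] u, φ u - φ v ≤ ω (dist u v)) :
    localSlope φ u ≤ ENNReal.ofReal c := by
  rcases (𝓝[≠] u).eq_or_neBot with isolated | _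
  · simp [localSlope, isolated]
  · have quotient_tendsto : Tendsto (fun v => ENNReal.ofReal (ω (dist u v) / dist u v))
        (𝓝[≠] u) (𝓝 (ENNReal.ofReal c)) :=
      ENNReal.tendsto_ofReal (hω.comp (tendsto_dist_nhdsNE_nhdsGT_zero u))
    rw [← quotient_tendsto.limsup_eq]
    refine limsup_le_limsup ?_
    filter_upwards [hφ] with v hv
    gcongr

lemma ofReal_div_le_localSlope {a r : ℝ} (hr : 0 < r)
    (h : ∃ᶠ s in 𝓝[>] (0 : ℝ), ∃ w, dist u w ≤ s * r ∧ s * a ≤ φ u - φ w) :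
    ENNReal.ofReal (a / r) ≤ localSlope φ u := by
  rcases le_or_gt a 0 with ha | ha
  · simp [ENNReal.ofReal_of_nonpos (div_nonpos_of_nonpos_of_nonneg ha hr.le)]
  refine le_limsup_of_frequently_le (frequently_iff.2 fun {U} hU => ?_)
  obtain ⟨ε, hε, ball_subset⟩ := Metric.mem_nhdsWithin_iff.1 hU
  have small_step : ∀ᶠ s in 𝓝[>] (0 : ℝ), s ∈ Set.Ioo 0 (ε / r) :=
    Ioo_mem_nhdsGT (by positivity)
  obtain ⟨s, ⟨w, dist_le, descent⟩, hs, hsε⟩ := (h.and_eventually small_step).exists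
  have descent_pos : 0 < φ u - φ w := (mul_pos hs ha).trans_le descent
  have hwu : w ≠ u := by
    rintro rfl
    simp at descent_pos
  have hw : w ∈ Metric.ball u ε := by
    rw [Metric.mem_ball']
    exact dist_le.trans_lt ((lt_div_iff₀ hr).1 hsε)
  refine ⟨w, ball_subset ⟨hw, hwu⟩, ENNReal.ofReal_le_ofReal ?_⟩
  calc a / r = s * a / (s * r) := (mul_div_mul_left a r hs.ne').symm
    _ ≤ (φ u - φ w) / dist u w :=
      div_le_div₀ descent_pos.le descent (dist_pos.2 hwu.symm) dist_le

lemma localSlope_le_iSup_ofReal_div {Φ1 Φ2 : ℝ → ℝ} (hΦ1pos : ∀ t : ℝ, 0 < t → 0 < Φ1 t)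
    (hΦ1lim : Tendsto (fun t => Φ1 t / t) (𝓝[>] 0) (𝓝 1))
    (hΦ2lim : Tendsto (fun t => Φ2 t / t) (𝓝[>] 0) (𝓝 0)) :
    localSlope φ u ≤
      ⨆ (v : X) (_ : v ≠ u),
        ENNReal.ofReal ((φ u - φ v - Φ2 (dist u v)) / Φ1 (dist u v)) := by
  set quotient : X → ℝ≥0∞ :=
    fun v => ENNReal.ofReal ((φ u - φ v - Φ2 (dist u v)) / Φ1 (dist u v))
  set S : ℝ≥0∞ := ⨆ (v : X) (_ : v ≠ u), quotient v
  rcases eq_or_ne S ⊤ with hS | hS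
  · exact hS ▸ le_top
  have sub_le (v : X) (hv : v ≠ u) :
      φ u - φ v ≤ S.toReal * Φ1 (dist u v) + Φ2 (dist u v) := by
    have quotient_le : quotient v ≤ S := le_iSup₂ (f := fun v (_ : v ≠ u) => quotient v) v hv
    have numerator_le : φ u - φ v - Φ2 (dist u v) ≤ S.toReal * Φ1 (dist u v) :=
      (div_le_iff₀ (hΦ1pos _ (dist_pos.2 hv.symm))).1
        ((ENNReal.ofReal_le_iff_le_toReal hS).1 quotient_le)
    linarith
  have modulus_lim :
      Tendsto (fun t => (S.toReal * Φ1 t + Φ2 t) / t) (𝓝[>] 0) (𝓝 S.toReal) := by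
    simpa only [mul_one, add_zero, add_div, mul_div_assoc] using
      (hΦ1lim.const_mul S.toReal).add hΦ2lim
  calc localSlope φ u ≤ ENNReal.ofReal S.toReal :=
        localSlope_le_of_eventually_sub_le modulus_lim (eventually_nhdsWithin_of_forall sub_le)
    _ = S := ENNReal.ofReal_toReal hS

theorem stmt6_general {Φ1 Φ2 : ℝ → ℝ} (hΦ1pos : ∀ t : ℝ, 0 < t → 0 < Φ1 t)
    (hΦ1lim : Tendsto (fun t => Φ1 t / t) (𝓝[>] 0) (𝓝 1))
    (hΦ2lim : Tendsto (fun t => Φ2 t / t) (𝓝[>] 0) (𝓝 0))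
    (hconv : ∀ v ≠ u, ∃ᶠ s in 𝓝[>] (0 : ℝ), ∃ us : X,
      dist u us ≤ s * Φ1 (dist u v) ∧
      φ us ≤ (1 - s) * φ u + s * φ v + s * Φ2 (dist u v)) :
    localSlope φ u =
      ⨆ (v : X) (_ : v ≠ u),
        ENNReal.ofReal ((φ u - φ v - Φ2 (dist u v)) / Φ1 (dist u v)) := by
  refine le_antisymm (localSlope_le_iSup_ofReal_div hΦ1pos hΦ1lim hΦ2lim) (iSup₂_le fun v hv => ?_)
  refine ofReal_div_le_localSlope (hΦ1pos _ (dist_pos.2 hv.symm)) ((hconv v hv).mono ?_)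
  rintro s ⟨w, dist_le, convex_le⟩
  exact ⟨w, dist_le, by linarith⟩

end LocalSlope

/-- Representation of the local slope under a generalized convexity property along
generalized geodesics:
`|∂φ|(u) = sup_{v ≠ u} (φ(u) − φ(v) − Φ²(d(u,v)))⁺ / Φ¹(d(u,v))`. -/
theorem stmt6 {X : Type*} [MetricSpace X] (φ : X → ℝ) (M : ℝ) (u : X) (hu : φ u ≤ M)
    (Φ1 Φ2 : ℝ → ℝ)
    (hΦ1nonneg : ∀ t : ℝ, 0 ≤ t → 0 ≤ Φ1 t)
    (hΦ2nonneg : ∀ t : ℝ, 0 ≤ t → 0 ≤ Φ2 t)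
    (hΦ1pos : ∀ t : ℝ, 0 < t → 0 < Φ1 t)
    (hΦ1lim : Tendsto (fun t => Φ1 t / t) (nhdsWithin 0 (Set.Ioi 0)) (nhds 1))
    (hΦ2lim : Tendsto (fun t => Φ2 t / t) (nhdsWithin 0 (Set.Ioi 0)) (nhds 0))
    (hconv : ∀ v : X, ∀ s ∈ Set.Icc (0:ℝ) 1, ∃ us : X,
      dist u us ≤ s * Φ1 (dist u v) ∧
      φ us ≤ (1 - s) * φ u + s * φ v + s * Φ2 (dist u v)) :
    localSlope φ u =
      ⨆ (v : X) (_ : v ≠ u),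
        ENNReal.ofReal ((φ u - φ v - Φ2 (dist u v)) / Φ1 (dist u v)) := by
  refine stmt6_general hΦ1pos hΦ1lim hΦ2lim fun v _ => Eventually.frequently ?_
  filter_upwards [Ioc_mem_nhdsGT one_pos] with s hs using hconv v s ⟨hs.1.le, hs.2⟩
end

section
/- Let (X,d) be a metric space, φ : X → ℝ a function, R > 0, and K ⊆ X a set with d(v,w) ≤ R for all v,w ∈ K. Let Φ¹, Φ² : [0,∞) → [0,∞) be functions with Φ¹(t) > 0 for all t > 0, and assume C₁ := sup_{0 < t ≤ R} Φ¹(t)/t < ∞ and C₂ := sup_{0 < t ≤ R} Φ²(t)/t < ∞. Let v ∈ K be such that for every w ∈ K with w ≠ v one has |∂φ|(v) ≥ (φ(v) − φ(w) − Φ²(d(v,w)))⁺ / Φ¹(d(v,w)). Then the global slope of φ at v relative to K satisfies sup_{w ∈ K, w ≠ v} (φ(v) − φ(w))⁺ / d(v,w) ≤ C₁·|∂φ|(v) + C₂. -/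
open Filter ENNReal

theorem ofReal_div_le_ofReal_div_mul_add {a b p d : ℝ} (hp : 0 < p) (hd : 0 < d) :
    ENNReal.ofReal (a / d) ≤
      ENNReal.ofReal (p / d) * ENNReal.ofReal ((a - b) / p) + ENNReal.ofReal (b / d) := by
  have split_quotient : a / d = p / d * ((a - b) / p) + b / d := by
    field_simp
    ring
  calc ENNReal.ofReal (a / d)
      ≤ ENNReal.ofReal (p / d * ((a - b) / p)) + ENNReal.ofReal (b / d) := by
        rw [split_quotient]
        exact ENNReal.ofReal_add_le
    _ = ENNReal.ofReal (p / d) * ENNReal.ofReal ((a - b) / p) + ENNReal.ofReal (b / d) := by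
        rw [ENNReal.ofReal_mul (div_pos hp hd).le]

theorem stmt7_general {X : Type*} [MetricSpace X] {φ p q : X → ℝ} {K : Set X} {v : X}
    {C₁ C₂ : ℝ} {L : ℝ≥0∞}
    (hp : ∀ w ∈ K, w ≠ v → 0 < p w)
    (hpC : ∀ w ∈ K, w ≠ v → p w / dist v w ≤ C₁)
    (hqC : ∀ w ∈ K, w ≠ v → q w / dist v w ≤ C₂)
    (hL : ∀ w ∈ K, w ≠ v → ENNReal.ofReal ((φ v - φ w - q w) / p w) ≤ L) :
    (⨆ (w : X) (_ : w ∈ K) (_ : w ≠ v), ENNReal.ofReal ((φ v - φ w) / dist v w)) ≤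
      ENNReal.ofReal C₁ * L + ENNReal.ofReal C₂ := by
  refine iSup₂_le fun w hw => iSup_le fun hne => ?_
  calc ENNReal.ofReal ((φ v - φ w) / dist v w)
      ≤ ENNReal.ofReal (p w / dist v w) * ENNReal.ofReal ((φ v - φ w - q w) / p w)
          + ENNReal.ofReal (q w / dist v w) :=
        ofReal_div_le_ofReal_div_mul_add (hp w hw hne) (dist_pos.2 hne.symm)
    _ ≤ ENNReal.ofReal C₁ * L + ENNReal.ofReal C₂ := by
        gcongr
        exacts [hpC w hw hne, hL w hw hne, hqC w hw hne]

/-- On a set `K` of diameter at most `R`, if the local slope at `v` dominates the generalized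
global slope quotients, then the global slope of `φ` at `v` relative to `K` is bounded by
`C₁·|∂φ|(v) + C₂`, where `C₁, C₂` bound `Φ¹(t)/t` and `Φ²(t)/t` on `(0,R]`. -/
theorem stmt7 {X : Type*} [MetricSpace X] (φ : X → ℝ) (R : ℝ) (hR : 0 < R)
    (K : Set X) (hK : ∀ v ∈ K, ∀ w ∈ K, dist v w ≤ R)
    (Φ1 Φ2 : ℝ → ℝ) (hΦ1pos : ∀ t : ℝ, 0 < t → 0 < Φ1 t)
    (C1 C2 : ℝ)
    (hC1 : ∀ t ∈ Set.Ioc (0:ℝ) R, Φ1 t / t ≤ C1)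
    (hC2 : ∀ t ∈ Set.Ioc (0:ℝ) R, Φ2 t / t ≤ C2)
    (v : X) (hv : v ∈ K)
    (hslope : ∀ w ∈ K, w ≠ v →
      ENNReal.ofReal ((φ v - φ w - Φ2 (dist v w)) / Φ1 (dist v w)) ≤ localSlope φ v) :
    (⨆ (w : X) (_ : w ∈ K) (_ : w ≠ v), ENNReal.ofReal ((φ v - φ w) / dist v w)) ≤
      ENNReal.ofReal C1 * localSlope φ v + ENNReal.ofReal C2 := by
  have dist_mem : ∀ w ∈ K, w ≠ v → dist v w ∈ Set.Ioc 0 R := fun w hw hne =>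
    ⟨dist_pos.2 hne.symm, hK v hv w hw⟩
  exact stmt7_general (fun w hw hne => hΦ1pos _ (dist_mem w hw hne).1)
    (fun w hw hne => hC1 _ (dist_mem w hw hne)) (fun w hw hne => hC2 _ (dist_mem w hw hne)) hslope
end

section
/- For each n ∈ ℕ let (X_n, d_n) be a metric space and φ_n : X_n → ℝ a function; let (X,d) be a metric space and φ : X → ℝ a function. Let Φ¹, Φ² : [0,∞) → [0,∞) be continuous functions with Φ¹(t) > 0 for all t > 0. Let x_n ∈ X_n for each n and x ∈ X. Assume: (a) for every n and every y ∈ X_n with y ≠ x_n one has |∂φ_n|(x_n) ≥ (φ_n(x_n) − φ_n(y) − Φ²(d_n(x_n,y)))⁺ / Φ¹(d_n(x_n,y)); (b) |∂φ|(x) ≤ sup_{y ∈ X, y ≠ x} (φ(x) − φ(y) − Φ²(d(x,y)))⁺ / Φ¹(d(x,y)) (in [0,∞], with sup over the empty set equal to 0); (c) for every y ∈ X there exists a sequence y_n ∈ X_n with liminf_{n→∞} (φ_n(x_n) − φ_n(y_n)) ≥ φ(x) − φ(y) and lim_{n→∞} d_n(x_n, y_n) = d(x,y). Then liminf_{n→∞}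 |∂φ_n|(x_n) ≥ |∂φ|(x). -/
open Filter ENNReal

/-- The quotient `(φ(x) − φ(y) − Φ²(d(x,y)))⁺ / Φ¹(d(x,y))`, with values in `[0,∞)`.
`ENNReal.ofReal` takes the positive part of the whole quotient, which is the same number where
`0 < Φ1 (dist x y)`. -/
noncomputable def slopeQuotient {X : Type*} [PseudoMetricSpace X] (Φ1 Φ2 : ℝ → ℝ) (φ : X → ℝ)
    (x y : X) : ℝ≥0∞ :=
  ENNReal.ofReal ((φ x - φ y - Φ2 (dist x y)) / Φ1 (dist x y))

/-- The generalized global slope of `φ` at `x`, the supremum of the slope quotients over `y ≠ x`.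
It equals `0` if `x` is the only point. -/
noncomputable def globalSlope {X : Type*} [PseudoMetricSpace X] (Φ1 Φ2 : ℝ → ℝ) (φ : X → ℝ)
    (x : X) : ℝ≥0∞ :=
  ⨆ (y : X) (_ : y ≠ x), slopeQuotient Φ1 Φ2 φ x y

theorem slopeQuotient_le_globalSlope {X : Type*} [PseudoMetricSpace X] (Φ1 Φ2 : ℝ → ℝ) (φ : X → ℝ)
    {x y : X} (hy : y ≠ x) : slopeQuotient Φ1 Φ2 φ x y ≤ globalSlope Φ1 Φ2 φ x :=
  le_iSup₂ (f := fun y (_ : y ≠ x) => slopeQuotient Φ1 Φ2 φ x y) y hy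

section Liminf

variable {ι : Type*} {l : Filter ι} {a b c : ι → ℝ} {A B C : ℝ}

theorem eventually_lt_sub_div_of_le_liminf (ha : (A : EReal) ≤ liminf (fun i => (a i : EReal)) l)
    (hb : Tendsto b l (nhds B)) (hc : Tendsto c l (nhds C)) (hC : 0 < C) {r : ℝ}
    (hr : r < (A - B) / C) : ∀ᶠ i in l, r < (a i - b i) / c i := by
  have hrA : r * C + B < A := lt_sub_iff_add_lt.1 ((lt_div_iff₀ hC).1 hr)
  obtain ⟨m, hm, hmA⟩ := exists_between hrA
  have a_gt : ∀ᶠ i in l, (m : EReal) < a i :=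
    eventually_lt_of_lt_liminf ((EReal.coe_lt_coe_iff.2 hmA).trans_le ha)
  have affine_lt : ∀ᶠ i in l, r * c i + b i < m :=
    ((hc.const_mul r).add hb).eventually_lt_const hm
  filter_upwards [a_gt, affine_lt, hc.eventually_const_lt hC] with i hma hlt hci
  rw [lt_div_iff₀ hci, lt_sub_iff_add_lt]
  exact hlt.trans (EReal.coe_lt_coe_iff.1 hma)

theorem ofReal_sub_div_le_liminf (ha : (A : EReal) ≤ liminf (fun i => (a i : EReal)) l)
    (hb : Tendsto b l (nhds B)) (hc : Tendsto c l (nhds C)) (hC : 0 < C) :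
    ENNReal.ofReal ((A - B) / C) ≤ liminf (fun i => ENNReal.ofReal ((a i - b i) / c i)) l := by
  refine le_of_forall_lt_imp_le_of_dense fun s hs => ?_
  have hs_real : s.toReal < (A - B) / C := toReal_lt_of_lt_ofReal hs
  refine le_liminf_of_le (by isBoundedDefault) ?_
  filter_upwards [eventually_lt_sub_div_of_le_liminf ha hb hc hC hs_real] with i hi
  exact ((lt_ofReal_iff_toReal_lt hs.ne_top).2 hi).le

end Liminf

section Recovery

variable {ι : Type*} {l : Filter ι} {Xn : ι → Type*} {φn : ∀ n, Xn n → ℝ} {xn : ∀ n, Xn n}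
  {X : Type*} {φ : X → ℝ} {x : X} {Φ1 Φ2 : ℝ → ℝ}

theorem slopeQuotient_le_liminf [∀ n, PseudoMetricSpace (Xn n)] [PseudoMetricSpace X]
    {yn : ∀ n, Xn n} {y : X}
    (hΦ1 : ContinuousAt Φ1 (dist x y)) (hΦ2 : ContinuousAt Φ2 (dist x y))
    (hΦ1pos : 0 < Φ1 (dist x y))
    (hφ : ((φ x - φ y : ℝ) : EReal) ≤
      liminf (fun n => ((φn n (xn n) - φn n (yn n) : ℝ) : EReal)) l)
    (hdist : Tendsto (fun n => dist (xn n) (yn n)) l (nhds (dist x y))) :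
    slopeQuotient Φ1 Φ2 φ x y ≤ liminf (fun n => slopeQuotient Φ1 Φ2 (φn n) (xn n) (yn n)) l :=
  ofReal_sub_div_le_liminf hφ (hΦ2.tendsto.comp hdist) (hΦ1.tendsto.comp hdist) hΦ1pos

theorem globalSlope_le_liminf [∀ n, PseudoMetricSpace (Xn n)] [MetricSpace X]
    (hΦ1 : ContinuousOn Φ1 (Set.Ioi 0)) (hΦ2 : ContinuousOn Φ2 (Set.Ioi 0))
    (hΦ1pos : ∀ t : ℝ, 0 < t → 0 < Φ1 t)
    (hrec : ∀ y : X, ∃ yn : ∀ n, Xn n,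
      ((φ x - φ y : ℝ) : EReal) ≤
        liminf (fun n => ((φn n (xn n) - φn n (yn n) : ℝ) : EReal)) l ∧
      Tendsto (fun n => dist (xn n) (yn n)) l (nhds (dist x y))) :
    globalSlope Φ1 Φ2 φ x ≤ liminf (fun n => globalSlope Φ1 Φ2 (φn n) (xn n)) l := by
  refine iSup₂_le fun y hy => ?_
  obtain ⟨yn, hφ, hdist⟩ := hrec y
  have hpos : 0 < dist x y := dist_pos.2 hy.symm
  have hnhds : Set.Ioi 0 ∈ nhds (dist x y) := Ioi_mem_nhds hpos
  have yn_ne : ∀ᶠ n in l, yn n ≠ xn n :=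
    (hdist.eventually_const_lt hpos).mono fun n hn hyx => by simp [hyx] at hn
  calc slopeQuotient Φ1 Φ2 φ x y
      ≤ liminf (fun n => slopeQuotient Φ1 Φ2 (φn n) (xn n) (yn n)) l :=
        slopeQuotient_le_liminf (hΦ1.continuousAt hnhds) (hΦ2.continuousAt hnhds)
          (hΦ1pos _ hpos) hφ hdist
    _ ≤ liminf (fun n => globalSlope Φ1 Φ2 (φn n) (xn n)) l :=
        liminf_le_liminf (yn_ne.mono fun _ hn => slopeQuotient_le_globalSlope Φ1 Φ2 _ hn)

theorem stmt8_general [∀ n, MetricSpace (Xn n)] [MetricSpace X]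
    (hΦ1 : ContinuousOn Φ1 (Set.Ioi 0)) (hΦ2 : ContinuousOn Φ2 (Set.Ioi 0))
    (hΦ1pos : ∀ t : ℝ, 0 < t → 0 < Φ1 t)
    (ha : ∀ᶠ n in l, globalSlope Φ1 Φ2 (φn n) (xn n) ≤ localSlope (φn n) (xn n))
    (hb : localSlope φ x ≤ globalSlope Φ1 Φ2 φ x)
    (hc : ∀ y : X, ∃ yn : ∀ n, Xn n,
      ((φ x - φ y : ℝ) : EReal) ≤
        liminf (fun n => ((φn n (xn n) - φn n (yn n) : ℝ) : EReal)) l ∧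
      Tendsto (fun n => dist (xn n) (yn n)) l (nhds (dist x y))) :
    localSlope φ x ≤ liminf (fun n => localSlope (φn n) (xn n)) l :=
  calc localSlope φ x
      ≤ globalSlope Φ1 Φ2 φ x := hb
    _ ≤ liminf (fun n => globalSlope Φ1 Φ2 (φn n) (xn n)) l :=
        globalSlope_le_liminf hΦ1 hΦ2 hΦ1pos hc
    _ ≤ liminf (fun n => localSlope (φn n) (xn n)) l := liminf_le_liminf ha

end Recovery

/-- Lower semicontinuity of local slopes along a sequence of metric spaces: if the slopes
in `Xₙ` dominate the generalized global slope quotients (a), the limiting slope is dominated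
by the generalized global slope (b), and mutual recovery sequences exist (c), then
`liminf |∂φₙ|(xₙ) ≥ |∂φ|(x)`. -/
theorem stmt8 (Xn : ℕ → Type*) [∀ n, MetricSpace (Xn n)] (φn : ∀ n, Xn n → ℝ)
    {X : Type*} [MetricSpace X] (φ : X → ℝ)
    (Φ1 Φ2 : ℝ → ℝ) (hΦ1cont : Continuous Φ1) (hΦ2cont : Continuous Φ2)
    (hΦ1pos : ∀ t : ℝ, 0 < t → 0 < Φ1 t)
    (xn : ∀ n, Xn n) (x : X)
    (ha : ∀ n, ∀ y : Xn n, y ≠ xn n →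
      ENNReal.ofReal ((φn n (xn n) - φn n y - Φ2 (dist (xn n) y)) / Φ1 (dist (xn n) y)) ≤
        localSlope (φn n) (xn n))
    (hb : localSlope φ x ≤
      ⨆ (y : X) (_ : y ≠ x),
        ENNReal.ofReal ((φ x - φ y - Φ2 (dist x y)) / Φ1 (dist x y)))
    (hc : ∀ y : X, ∃ yn : ∀ n, Xn n,
      ((φ x - φ y : ℝ) : EReal) ≤
        Filter.liminf (fun n => ((φn n (xn n) - φn n (yn n) : ℝ) : EReal)) atTop ∧
      Tendsto (fun n => dist (xn n) (yn n)) atTop (nhds (dist x y))) :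
    localSlope φ x ≤ Filter.liminf (fun n => localSlope (φn n) (xn n)) atTop :=
  stmt8_general hΦ1cont.continuousOn hΦ2cont.continuousOn hΦ1pos
    (Eventually.of_forall fun n => iSup₂_le (ha n)) hb hc
end

section
/- For each n ∈ ℕ let (X_n, d_n) be a metric space and φ_n : X_n → ℝ a function; let (X,d) be a metric space and φ : X → ℝ a function. Let τ > 0, let x_n ∈ X_n for each n, x ∈ X, and U ∈ X. For each n let Y_n ∈ X_n be a minimizer over X_n of the functional v ↦ φ_n(v) + d_n(x_n, v)²/(2τ). Assume: (a) liminf_{n→∞} φ_n(Y_n) ≥ φ(U); (b) liminf_{n→∞} d_n(x_n, Y_n) ≥ d(x, U); (c) for every v ∈ X there exists a sequence v_n ∈ X_n with limsup_{n→∞} φ_n(v_n) ≤ φ(v) and limsup_{n→∞} d_n(x_n, v_n) ≤ d(x,v). Then: (i) U is a minimizer over X of the functional v ↦ φ(v) + d(x,v)²/(2τ); (ii) lim_{n→∞} [φ_n(Y_n) + d_n(x_n,Y_n)²/(2τ)] = φ(U) + d(x,U)²/(2τ); (iii) lim_{n→∞} φ_n(Y_n) = φ(U) and lim_{n→∞}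 d_n(x_n,Y_n) = d(x,U). -/
open Filter

/-!
If `Yₙ` minimizes `φₙ + ψₙ` and `vₙ` is a recovery sequence for `v`, then
`φ U + ψ U ≤ liminf (φₙ Yₙ + ψₙ Yₙ) ≤ limsup (φₙ Yₙ + ψₙ Yₙ) ≤ limsup (φₙ vₙ + ψₙ vₙ) ≤ φ v + ψ v`.
Arbitrary `v` gives minimality of `U`, and `v = U` gives convergence of the minimal values. Since
each summand satisfies its own liminf inequality, an excess in one of them cannot be compensated by
the other, so both converge separately. A dissipation `ψ ∘ D` with `ψ` continuous and strictly
increasing inherits the liminf and limsup inequalities of `D`, and `ψ` is an embedding, so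
convergence of `ψ ∘ D` is convergence of `D`; the theorem is the case `ψ r = r ^ 2 / (2 * τ)`.
-/

open scoped Topology NNReal

section LiminfLimsup

variable {ι : Type*} {l : Filter ι}

theorem le_liminf_iff_tendsto_min {α : Type*} [CompleteLinearOrder α] [TopologicalSpace α]
    [OrderTopology α] {u : ι → α} {a : α} :
    a ≤ liminf u l ↔ Tendsto (fun i => min (u i) a) l (𝓝 a) := by
  rw [le_liminf_iff, tendsto_order]
  constructor
  · intro h
    refine ⟨fun c hc => (h c hc).mono fun i hi => lt_min hi hc, fun c hc => ?_⟩
    exact .of_forall fun i => (min_le_right _ _).trans_lt hc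
  · exact fun h c hc => (h.1 c hc).mono fun i hi => hi.trans_le (min_le_left _ _)

theorem limsup_le_iff_tendsto_max {α : Type*} [CompleteLinearOrder α] [TopologicalSpace α]
    [OrderTopology α] {u : ι → α} {a : α} :
    limsup u l ≤ a ↔ Tendsto (fun i => max (u i) a) l (𝓝 a) :=
  le_liminf_iff_tendsto_min (α := αᵒᵈ)

theorem coe_le_liminf_coe_iff_tendsto_min {u : ι → ℝ} {a : ℝ} :
    (a : EReal) ≤ liminf (fun i => (u i : EReal)) l ↔
      Tendsto (fun i => min (u i) a) l (𝓝 a) := by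
  simp_rw [le_liminf_iff_tendsto_min, ← EReal.coe_strictMono.monotone.map_min, EReal.tendsto_coe]

theorem limsup_coe_le_coe_iff_tendsto_max {u : ι → ℝ} {a : ℝ} :
    limsup (fun i => (u i : EReal)) l ≤ a ↔ Tendsto (fun i => max (u i) a) l (𝓝 a) := by
  simp_rw [limsup_le_iff_tendsto_max, ← EReal.coe_strictMono.monotone.map_max, EReal.tendsto_coe]

section Comp

variable {f : ℝ≥0 → ℝ} {u : ι → ℝ≥0} {a : ℝ≥0}

theorem coe_le_liminf_comp_of_monotone (hf : Monotone f) (hfa : ContinuousAt f a)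
    (hu : ((a : ℝ) : EReal) ≤ liminf (fun i => ((u i : ℝ) : EReal)) l) :
    (f a : EReal) ≤ liminf (fun i => (f (u i) : EReal)) l := by
  simp_rw [coe_le_liminf_coe_iff_tendsto_min, ← NNReal.coe_min, NNReal.tendsto_coe] at hu
  simp_rw [coe_le_liminf_coe_iff_tendsto_min, ← hf.map_min]
  exact hfa.tendsto.comp hu

theorem limsup_comp_le_coe_of_monotone (hf : Monotone f) (hfa : ContinuousAt f a)
    (hu : limsup (fun i => ((u i : ℝ) : EReal)) l ≤ ((a : ℝ) : EReal)) :
    limsup (fun i => (f (u i) : EReal)) l ≤ f a := by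
  simp_rw [limsup_coe_le_coe_iff_tendsto_max, ← NNReal.coe_max, NNReal.tendsto_coe] at hu
  simp_rw [limsup_coe_le_coe_iff_tendsto_max, ← hf.map_max]
  exact hfa.tendsto.comp hu

end Comp

section Add

variable {u v : ι → ℝ} {a b : ℝ}

theorem coe_add_le_liminf_coe_add (hu : (a : EReal) ≤ liminf (fun i => (u i : EReal)) l)
    (hv : (b : EReal) ≤ liminf (fun i => (v i : EReal)) l) :
    ((a + b : ℝ) : EReal) ≤ liminf (fun i => ((u i + v i : ℝ) : EReal)) l := by
  simp_rw [EReal.coe_add]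
  exact (add_le_add hu hv).trans EReal.le_liminf_add

theorem limsup_coe_add_le_coe_add (hu : limsup (fun i => (u i : EReal)) l ≤ a)
    (hv : limsup (fun i => (v i : EReal)) l ≤ b) :
    limsup (fun i => ((u i + v i : ℝ) : EReal)) l ≤ ((a + b : ℝ) : EReal) := by
  have hu_top := (hu.trans_lt (EReal.coe_lt_top a)).ne
  have hv_top := (hv.trans_lt (EReal.coe_lt_top b)).ne
  simp_rw [EReal.coe_add]
  exact (EReal.limsup_add_le (.inr hv_top) (.inl hu_top)).trans (add_le_add hu hv)

theorem tendsto_left_of_limsup_add_le (hu : (a : EReal) ≤ liminf (fun i => (u i : EReal)) l)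
    (hv : (b : EReal) ≤ liminf (fun i => (v i : EReal)) l)
    (huv : limsup (fun i => ((u i + v i : ℝ) : EReal)) l ≤ ((a + b : ℝ) : EReal)) :
    Tendsto u l (𝓝 a) := by
  have limsup_add_le : limsup (fun i => (u i : EReal)) l + b ≤ a + b :=
    calc limsup (fun i => (u i : EReal)) l + b
      _ ≤ limsup (fun i => (u i : EReal)) l + liminf (fun i => (v i : EReal)) l := by gcongr
      _ ≤ limsup (fun i => ((u i + v i : ℝ) : EReal)) l := EReal.le_limsup_add
      _ ≤ a + b := huv
  have limsup_le : limsup (fun i => (u i : EReal)) l ≤ a :=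
    (EReal.addLECancellable_coe b).add_le_add_iff_right.1 limsup_add_le
  exact EReal.tendsto_coe.1 (tendsto_of_le_liminf_of_limsup_le hu limsup_le)

end Add

end LiminfLimsup

theorem tendsto_comp_iff_of_strictMono {ι α β : Type*} [LinearOrder α] [TopologicalSpace α]
    [OrderTopology α] [PreconnectedSpace α] [LinearOrder β] [TopologicalSpace β] [OrderTopology β]
    {l : Filter ι} {f : α → β} (hf : StrictMono f) (hfc : Continuous f) {u : ι → α} {a : α} :
    Tendsto (fun i => f (u i)) l (𝓝 (f a)) ↔ Tendsto u l (𝓝 a) :=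
  (hf.isEmbedding_of_ordConnected
    (isPreconnected_range hfc).ordConnected).tendsto_nhds_iff.symm

theorem strictMono_coe_sq_div {c : ℝ} (hc : 0 < c) : StrictMono fun r : ℝ≥0 => (r : ℝ) ^ 2 / c :=
  fun r s hrs => by
    have hrs' : (r : ℝ) < s := hrs
    dsimp only
    gcongr

section Minimizers

variable {ι : Type*} {l : Filter ι} {Xn : ι → Type*} {X : Type*}

theorem minimizer_and_tendsto_of_add [l.NeBot] {φn ψn : ∀ i, Xn i → ℝ} {φ ψ : X → ℝ}
    {Yn : ∀ i, Xn i} {U : X}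
    (hmin : ∀ᶠ i in l, ∀ v, φn i (Yn i) + ψn i (Yn i) ≤ φn i v + ψn i v)
    (hφ : (φ U : EReal) ≤ liminf (fun i => (φn i (Yn i) : EReal)) l)
    (hψ : (ψ U : EReal) ≤ liminf (fun i => (ψn i (Yn i) : EReal)) l)
    (hrec : ∀ v, ∃ vn : ∀ i, Xn i,
      limsup (fun i => (φn i (vn i) : EReal)) l ≤ φ v ∧
      limsup (fun i => (ψn i (vn i) : EReal)) l ≤ ψ v) :
    (∀ v, φ U + ψ U ≤ φ v + ψ v) ∧
    Tendsto (fun i => φn i (Yn i)) l (𝓝 (φ U)) ∧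
    Tendsto (fun i => ψn i (Yn i)) l (𝓝 (ψ U)) := by
  have limsup_le (v : X) : limsup (fun i => ((φn i (Yn i) + ψn i (Yn i) : ℝ) : EReal)) l ≤
      ((φ v + ψ v : ℝ) : EReal) := by
    obtain ⟨vn, hφv, hψv⟩ := hrec v
    calc limsup (fun i => ((φn i (Yn i) + ψn i (Yn i) : ℝ) : EReal)) l
      _ ≤ limsup (fun i => ((φn i (vn i) + ψn i (vn i) : ℝ) : EReal)) l :=
        limsup_le_limsup (hmin.mono fun i hi => EReal.coe_le_coe (hi (vn i)))
      _ ≤ ((φ v + ψ v : ℝ) : EReal) := limsup_coe_add_le_coe_add hφv hψv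
  refine ⟨fun v => ?_, tendsto_left_of_limsup_add_le hφ hψ (limsup_le U),
    tendsto_left_of_limsup_add_le hψ hφ ?_⟩
  · have le_liminf := coe_add_le_liminf_coe_add hφ hψ
    exact EReal.coe_le_coe_iff.1 ((le_liminf.trans liminf_le_limsup).trans (limsup_le v))
  · simpa only [add_comm] using limsup_le U

theorem stmt9_general [l.NeBot] {φn : ∀ i, Xn i → ℝ} {φ : X → ℝ} {Dn : ∀ i, Xn i → ℝ≥0}
    {D : X → ℝ≥0} {ψ : ℝ≥0 → ℝ} (hψ : StrictMono ψ) (hψc : Continuous ψ)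
    {Yn : ∀ i, Xn i} {U : X}
    (hmin : ∀ᶠ i in l, ∀ v, φn i (Yn i) + ψ (Dn i (Yn i)) ≤ φn i v + ψ (Dn i v))
    (hφ : (φ U : EReal) ≤ liminf (fun i => (φn i (Yn i) : EReal)) l)
    (hD : ((D U : ℝ) : EReal) ≤ liminf (fun i => ((Dn i (Yn i) : ℝ) : EReal)) l)
    (hrec : ∀ v, ∃ vn : ∀ i, Xn i,
      limsup (fun i => (φn i (vn i) : EReal)) l ≤ φ v ∧
      limsup (fun i => ((Dn i (vn i) : ℝ) : EReal)) l ≤ ((D v : ℝ) : EReal)) :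
    (∀ v, φ U + ψ (D U) ≤ φ v + ψ (D v)) ∧
    Tendsto (fun i => φn i (Yn i) + ψ (Dn i (Yn i))) l (𝓝 (φ U + ψ (D U))) ∧
    Tendsto (fun i => φn i (Yn i)) l (𝓝 (φ U)) ∧
    Tendsto (fun i => Dn i (Yn i)) l (𝓝 (D U)) := by
  have hrecψ (v : X) : ∃ vn : ∀ i, Xn i,
      limsup (fun i => (φn i (vn i) : EReal)) l ≤ φ v ∧
      limsup (fun i => (ψ (Dn i (vn i)) : EReal)) l ≤ ψ (D v) := by
    obtain ⟨vn, hφv, hDv⟩ := hrec v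
    exact ⟨vn, hφv, limsup_comp_le_coe_of_monotone hψ.monotone hψc.continuousAt hDv⟩
  obtain ⟨hU, tendsto_φ, tendsto_ψ⟩ := minimizer_and_tendsto_of_add
    (ψn := fun i v => ψ (Dn i v)) (ψ := fun v => ψ (D v)) hmin hφ
    (coe_le_liminf_comp_of_monotone hψ.monotone hψc.continuousAt hD) hrecψ
  exact ⟨hU, tendsto_φ.add tendsto_ψ, tendsto_φ,
    (tendsto_comp_iff_of_strictMono hψ hψc).1 tendsto_ψ⟩

end Minimizers

/-- Convergence of minimizers of one step of the minimizing movement scheme along a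
sequence of metric spaces: under Γ-liminf inequalities for energy and dissipation and
the existence of mutual recovery sequences, the limit `U` of minimizers `Yₙ` of
`v ↦ φₙ(v) + dₙ(xₙ,v)²/(2τ)` minimizes `v ↦ φ(v) + d(x,v)²/(2τ)`, and the incremental
functionals, energies, and distances converge. -/
theorem stmt9 (Xn : ℕ → Type*) [∀ n, MetricSpace (Xn n)] (φn : ∀ n, Xn n → ℝ)
    {X : Type*} [MetricSpace X] (φ : X → ℝ)
    (τ : ℝ) (hτ : 0 < τ)
    (xn : ∀ n, Xn n) (x : X) (U : X) (Yn : ∀ n, Xn n)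
    (hmin : ∀ n, ∀ v : Xn n,
      φn n (Yn n) + dist (xn n) (Yn n) ^ 2 / (2 * τ) ≤
        φn n v + dist (xn n) v ^ 2 / (2 * τ))
    (ha : ((φ U : ℝ) : EReal) ≤ Filter.liminf (fun n => ((φn n (Yn n) : ℝ) : EReal)) atTop)
    (hb : ((dist x U : ℝ) : EReal) ≤
      Filter.liminf (fun n => ((dist (xn n) (Yn n) : ℝ) : EReal)) atTop)
    (hc : ∀ v : X, ∃ vn : ∀ n, Xn n,
      Filter.limsup (fun n => ((φn n (vn n) : ℝ) : EReal)) atTop ≤ ((φ v : ℝ) : EReal) ∧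
      Filter.limsup (fun n => ((dist (xn n) (vn n) : ℝ) : EReal)) atTop ≤
        ((dist x v : ℝ) : EReal)) :
    (∀ v : X, φ U + dist x U ^ 2 / (2 * τ) ≤ φ v + dist x v ^ 2 / (2 * τ)) ∧
    Tendsto (fun n => φn n (Yn n) + dist (xn n) (Yn n) ^ 2 / (2 * τ)) atTop
      (nhds (φ U + dist x U ^ 2 / (2 * τ))) ∧
    Tendsto (fun n => φn n (Yn n)) atTop (nhds (φ U)) ∧
    Tendsto (fun n => dist (xn n) (Yn n)) atTop (nhds (dist x U)) := by
  simpa only [← NNReal.tendsto_coe, coe_nndist] using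
    stmt9_general (Dn := fun n => nndist (xn n)) (D := nndist x)
      (strictMono_coe_sq_div (mul_pos two_pos hτ)) (by fun_prop) (.of_forall hmin) ha hb hc
end

section
/- Let H be a real Hilbert space, V ⊆ H a closed linear subspace, c > 0, T : H → H a continuous linear self-adjoint operator with ⟨Tx, x⟩ ≥ c‖x‖² for all x ∈ H, and g ∈ H. Then: (i) there exists a unique h* ∈ V minimizing the functional h ↦ (1/2)⟨Th, h⟩ − ⟨g, h⟩ over V; (ii) h* satisfies the Euler–Lagrange equation ⟨T h* − g, h⟩ = 0 for all h ∈ V; (iii) sup_{h ∈ V, h ≠ 0} (⟨g, h⟩)⁺ / √⟨Th, h⟩ = √⟨T h*, h*⟩, where a⁺ := max(a,0) and the supremum over the empty set (i.e. when V = {0}) is interpreted as 0. -/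
open RealInnerProductSpace

/-!
Restricting `⟨T ·, ·⟩` to `V` gives a bounded coercive symmetric form `B`, so by Lax–Milgram some
`u : V` represents `⟨g, ·⟩` as `B u`. Completing the square, the energy at `v` exceeds the energy at
`u` by exactly `½ B(v - u, v - u)`, which is positive unless `v = u`. The slope formula is the
Cauchy–Schwarz inequality for `B`, which is attained at `v = u`.
-/

section QuadraticEnergy

open LinearMap (BilinForm)

variable {𝕜 E : Type*} [Field 𝕜] [AddCommGroup E] [Module 𝕜 E] {B : BilinForm 𝕜 E}

/-- The energy `v ↦ ½ B(v, v) - f(v)` of a bilinear form `B` under a linear load `f`; for symmetric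
`B`, its critical points are the solutions `u` of `B u = f`. -/
def quadraticEnergy (B : BilinForm 𝕜 E) (f : Module.Dual 𝕜 E) (v : E) : 𝕜 :=
  (1 / 2) * B v v - f v

theorem quadraticEnergy_eq_add_half_apply_sub_self [NeZero (2 : 𝕜)] (hB : B.IsSymm) (u v : E) :
    quadraticEnergy B (B u) v = quadraticEnergy B (B u) u + (1 / 2) * B (v - u) (v - u) := by
  have apply_comm : B v u = B u v := hB.eq v u
  simp only [quadraticEnergy, map_sub, LinearMap.sub_apply, apply_comm]
  field_simp
  ring

variable [LinearOrder 𝕜] [IsStrictOrderedRing 𝕜]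

theorem quadraticEnergy_self_le (hB : B.IsPosSemidef) (u v : E) :
    quadraticEnergy B (B u) u ≤ quadraticEnergy B (B u) v := by
  rw [quadraticEnergy_eq_add_half_apply_sub_self hB.isSymm u v]
  have gap_nonneg := hB.nonneg (v - u)
  linarith

theorem eq_of_quadraticEnergy_le (hB : B.IsSymm) (hpos : ∀ v ≠ 0, 0 < B v v) {u v : E}
    (hv : quadraticEnergy B (B u) v ≤ quadraticEnergy B (B u) u) : v = u := by
  rw [quadraticEnergy_eq_add_half_apply_sub_self hB u v] at hv
  by_contra hne
  have gap_pos := hpos (v - u) (sub_ne_zero.mpr hne)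
  linarith

end QuadraticEnergy

section DualNorm

variable {E : Type*} [AddCommGroup E] [Module ℝ E] {B : LinearMap.BilinForm ℝ E}

theorem apply_div_sqrt_apply_self_le (hB : B.IsPosSemidef) (u v : E) :
    B u v / √(B v v) ≤ √(B u u) := by
  refine div_le_of_le_mul₀ (Real.sqrt_nonneg _) (Real.sqrt_nonneg _) ?_
  have cauchy_schwarz : B u v ^ 2 ≤ B u u * B v v :=
    B.apply_sq_le_of_symm hB.nonneg (LinearMap.BilinForm.isSymm_iff.mp hB.isSymm) u v
  rw [← Real.sqrt_mul (hB.nonneg u)]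
  exact Real.le_sqrt_of_sq_le cauchy_schwarz

theorem iSup_ofReal_apply_div_sqrt_apply_self (hB : B.IsPosSemidef) (u : E) :
    ⨆ (v : E) (_ : v ≠ 0), ENNReal.ofReal (B u v / √(B v v)) = ENNReal.ofReal √(B u u) := by
  refine le_antisymm
    (iSup₂_le fun v _ ↦ ENNReal.ofReal_le_ofReal (apply_div_sqrt_apply_self_le hB u v)) ?_
  obtain rfl | hu := eq_or_ne u 0
  · simp
  · exact le_iSup₂_of_le u hu (by rw [Real.div_sqrt])

end DualNorm

section Coercive

variable {E : Type*}

theorem apply_self_pos_of_isCoercive [NormedAddCommGroup E] [NormedSpace ℝ E]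
    {B : E →L[ℝ] E →L[ℝ] ℝ} (hB : IsCoercive B) {v : E} (hv : v ≠ 0) : 0 < B v v := by
  obtain ⟨C, hC, hcoer⟩ := hB
  exact lt_of_lt_of_le (by positivity) (hcoer v)

theorem isPosSemidef_of_isCoercive [SeminormedAddCommGroup E] [NormedSpace ℝ E]
    {B : E →L[ℝ] E →L[ℝ] ℝ} (hB : IsCoercive B) (hsymm : B.toBilinForm.IsSymm) :
    B.toBilinForm.IsPosSemidef where
  eq := hsymm.eq
  nonneg v := by
    obtain ⟨C, hC, hcoer⟩ := hB
    exact le_trans (by positivity) (hcoer v)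

theorem exists_apply_eq_of_isCoercive [NormedAddCommGroup E] [InnerProductSpace ℝ E]
    [CompleteSpace E] {B : E →L[ℝ] E →L[ℝ] ℝ} (hB : IsCoercive B) (f : StrongDual ℝ E) :
    ∃ u, B u = f := by
  let riesz := (InnerProductSpace.toDual ℝ E).symm f
  refine ⟨hB.continuousLinearEquivOfBilin.symm riesz, ContinuousLinearMap.ext fun v ↦ ?_⟩
  rw [← hB.continuousLinearEquivOfBilin_apply, ContinuousLinearEquiv.apply_symm_apply,
    InnerProductSpace.toDual_symm_apply]

end Coercive

section RestrictedForm

variable {H : Type*} [NormedAddCommGroup H] [InnerProductSpace ℝ H]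

/-- The bounded bilinear form `(x, y) ↦ ⟪T x, y⟫` of an operator `T`, restricted to the subspace
`V`; minimizing over `V` becomes an unconstrained problem for this form. -/
noncomputable def restrictedForm (T : H →L[ℝ] H) (V : Submodule ℝ H) : V →L[ℝ] V →L[ℝ] ℝ :=
  (innerSL ℝ).bilinearComp (T ∘L V.subtypeL) V.subtypeL

@[simp]
theorem restrictedForm_apply (T : H →L[ℝ] H) (V : Submodule ℝ H) (x y : V) :
    restrictedForm T V x y = ⟪T x, (y : H)⟫ := rfl

theorem isCoercive_restrictedForm {T : H →L[ℝ] H} {V : Submodule ℝ H} {c : ℝ} (hc : 0 < c)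
    (hcoer : ∀ x ∈ V, c * ‖x‖ ^ 2 ≤ ⟪T x, x⟫) : IsCoercive (restrictedForm T V) :=
  ⟨c, hc, fun x ↦ by simpa [pow_two, mul_assoc] using hcoer x x.2⟩

end RestrictedForm

theorem stmt10_general {H : Type*} [NormedAddCommGroup H] [InnerProductSpace ℝ H]
    (V : Submodule ℝ H) [CompleteSpace V] {c : ℝ} (hc : 0 < c)
    (T : H →L[ℝ] H) (hT : ∀ x ∈ V, ∀ y ∈ V, ⟪T x, y⟫ = ⟪x, T y⟫)
    (hcoer : ∀ x ∈ V, c * ‖x‖ ^ 2 ≤ ⟪T x, x⟫) (g : H) :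
    ∃ hstar : H, hstar ∈ V ∧
      (∀ h ∈ V, (1 / 2) * ⟪T hstar, hstar⟫ - ⟪g, hstar⟫ ≤ (1 / 2) * ⟪T h, h⟫ - ⟪g, h⟫) ∧
      (∀ h' ∈ V,
        (∀ h ∈ V, (1 / 2) * ⟪T h', h'⟫ - ⟪g, h'⟫ ≤ (1 / 2) * ⟪T h, h⟫ - ⟪g, h⟫) →
        h' = hstar) ∧
      (∀ h ∈ V, ⟪T hstar - g, h⟫ = 0) ∧
      ((⨆ (h : H) (_ : h ∈ V) (_ : h ≠ 0), ENNReal.ofReal (⟪g, h⟫ / √⟪T h, h⟫)) =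
        ENNReal.ofReal √⟪T hstar, hstar⟫) := by
  have coercive := isCoercive_restrictedForm hc hcoer
  have symm : (restrictedForm T V).toBilinForm.IsSymm :=
    ⟨fun x y ↦ (hT x x.2 y y.2).trans (real_inner_comm _ _)⟩
  have posSemidef := isPosSemidef_of_isCoercive coercive symm
  obtain ⟨u, hu⟩ := exists_apply_eq_of_isCoercive coercive (innerSL ℝ g ∘L V.subtypeL)
  have euler_lagrange (v : V) : ⟪T u, (v : H)⟫ = ⟪g, (v : H)⟫ := DFunLike.congr_fun hu v
  have energy_eq (v : V) : quadraticEnergy (restrictedForm T V).toBilinForm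
      ((restrictedForm T V).toBilinForm u) v = (1 / 2) * ⟪T v, (v : H)⟫ - ⟪g, (v : H)⟫ := by
    simp [quadraticEnergy, euler_lagrange]
  refine ⟨u, u.2, fun h hh ↦ ?minimal, fun h' hh' hmin ↦ ?unique, fun h hh ↦ ?critical, ?slope⟩
  case minimal => simpa only [energy_eq] using quadraticEnergy_self_le posSemidef u ⟨h, hh⟩
  case unique =>
    refine congrArg Subtype.val (eq_of_quadraticEnergy_le (v := ⟨h', hh'⟩) symm
      (fun v hv ↦ apply_self_pos_of_isCoercive coercive hv) ?_)
    simpa only [energy_eq] using hmin u u.2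
  case critical => rw [inner_sub_left, euler_lagrange ⟨h, hh⟩, sub_self]
  case slope =>
    simpa [euler_lagrange, iSup_subtype] using iSup_ofReal_apply_div_sqrt_apply_self posSemidef u

/-- Abstract Hilbert-space form of the fine representation of the local slope: for a
coercive continuous self-adjoint operator `T`, a closed subspace `V` and `g ∈ H`, the
functional `h ↦ (1/2)⟨Th,h⟩ − ⟨g,h⟩` has a unique minimizer `h*` over `V`, which satisfies
the Euler–Lagrange equation, and `sup_{h ∈ V, h ≠ 0} (⟨g,h⟩)⁺/√⟨Th,h⟩ = √⟨Th*,h*⟩`. -/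
theorem stmt10 {H : Type*} [NormedAddCommGroup H] [InnerProductSpace ℝ H] [CompleteSpace H]
    (V : Submodule ℝ H) (hV : IsClosed (V : Set H))
    (c : ℝ) (hc : 0 < c)
    (T : H →L[ℝ] H) (hT : ∀ x y : H, ⟪T x, y⟫ = ⟪x, T y⟫)
    (hcoer : ∀ x : H, c * ‖x‖ ^ 2 ≤ ⟪T x, x⟫)
    (g : H) :
    ∃ hstar : H, hstar ∈ V ∧
      (∀ h ∈ V, (1/2) * ⟪T hstar, hstar⟫ - ⟪g, hstar⟫ ≤ (1/2) * ⟪T h, h⟫ - ⟪g, h⟫) ∧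
      (∀ h' ∈ V,
        (∀ h ∈ V, (1/2) * ⟪T h', h'⟫ - ⟪g, h'⟫ ≤ (1/2) * ⟪T h, h⟫ - ⟪g, h⟫) →
        h' = hstar) ∧
      (∀ h ∈ V, ⟪T hstar - g, h⟫ = 0) ∧
      ((⨆ (h : H) (_ : h ∈ V) (_ : h ≠ 0),
          ENNReal.ofReal (⟪g, h⟫ / Real.sqrt ⟪T h, h⟫)) =
        ENNReal.ofReal (Real.sqrt ⟪T hstar, hstar⟫)) := by
  have : CompleteSpace V := hV.completeSpace_coe
  exact stmt10_general V hc T (fun x _ y _ ↦ hT x y) (fun x _ ↦ hcoer x) g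
end

section
/- Let H be a real inner product space, and let D ≥ 0, M ≥ 0, C₀ ≥ 0 be constants. Let g₀, g₁, b ∈ H satisfy ‖g₁ − g₀‖ ≤ D, ‖b‖ ≤ C₀·D², and ‖g₀‖² ≤ M. For s ∈ [0,1] define g_s := (1−s)·g₀ + s·g₁ − s(1−s)·b. Then there exists a constant C > 0 depending only on C₀ such that for all s ∈ [0,1]: (i) ‖g_s − g₀‖² ≤ s²·(‖g₁ − g₀‖² + C·D³ + C·D⁴); and (ii) ‖g_s‖² ≤ (1−s)·‖g₀‖² + s·‖g₁‖² + C·s·(√M·D² + D³ + D⁴). -/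
/-!
Both estimates come from the triangle inequality. Relative to `g₀` the curve is
`s • ((g₁ - g₀) - (1 - s) • b)`, and squaring the triangle inequality gives (i). Relative to the
segment it is a perturbation by `(s * (1 - s)) • b`, so (ii) follows from the convexity of `‖·‖ ^ 2`
and the bound `‖g₀‖ + ‖g₁ - g₀‖` for the norm on the segment. Both error terms have the form
`2 * (r + d) * β + β ^ 2` with `d ≤ D` and `β ≤ C₀ * D ^ 2`.
-/

section QuadInterp

variable {R E : Type*} [CommRing R] [AddCommGroup E] [Module R E]

/-- The curve `g_s` of generalized geodesics: linear interpolation from `x` at `s = 0` to `y` at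
`s = 1`, bent by the quadratic correction `s (1 - s) b`, which vanishes at both endpoints. -/
def quadInterp (x y b : E) (s : R) : E :=
  (1 - s) • x + s • y - (s * (1 - s)) • b

lemma quadInterp_sub_left (x y b : E) (s : R) :
    quadInterp x y b s - x = s • ((y - x) - (1 - s) • b) := by
  unfold quadInterp
  module

end QuadInterp

section Norm

variable {E : Type*} [SeminormedAddCommGroup E] [NormedSpace ℝ E] {s : ℝ}

lemma norm_segment_sq_le (x y : E) (hs : s ∈ Set.Icc (0 : ℝ) 1) :
    ‖(1 - s) • x + s • y‖ ^ 2 ≤ (1 - s) * ‖x‖ ^ 2 + s * ‖y‖ ^ 2 :=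
  (convexOn_univ_norm.pow (fun _ _ ↦ norm_nonneg _) 2).2 (Set.mem_univ x) (Set.mem_univ y)
    (sub_nonneg.2 hs.2) hs.1 (sub_add_cancel 1 s)

lemma norm_segment_le_norm_add_norm_sub (x y : E) (hs : s ∈ Set.Icc (0 : ℝ) 1) :
    ‖(1 - s) • x + s • y‖ ≤ ‖x‖ + ‖y - x‖ :=
  calc ‖(1 - s) • x + s • y‖ = ‖x + s • (y - x)‖ := by congr 1; module
    _ ≤ ‖x‖ + s * ‖y - x‖ := norm_add_le_of_le le_rfl (norm_smul_of_nonneg hs.1 _).le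
    _ ≤ ‖x‖ + ‖y - x‖ := by gcongr; exact mul_le_of_le_one_left (norm_nonneg _) hs.2

lemma norm_quadInterp_sub_left_le (x y b : E) (hs : s ∈ Set.Icc (0 : ℝ) 1) :
    ‖quadInterp x y b s - x‖ ≤ s * (‖y - x‖ + ‖b‖) := by
  obtain ⟨hs₀, hs₁⟩ := hs
  have hb : ‖(1 - s) • b‖ ≤ ‖b‖ := by
    rw [norm_smul_of_nonneg (sub_nonneg.2 hs₁)]
    exact mul_le_of_le_one_left (norm_nonneg b) (sub_le_self 1 hs₀)
  rw [quadInterp_sub_left, norm_smul_of_nonneg hs₀]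
  gcongr
  exact norm_sub_le_of_le le_rfl hb

lemma norm_quadInterp_sq_le (x y b : E) (hs : s ∈ Set.Icc (0 : ℝ) 1) :
    ‖quadInterp x y b s‖ ^ 2 ≤ (1 - s) * ‖x‖ ^ 2 + s * ‖y‖ ^ 2 +
      s * (2 * (‖x‖ + ‖y - x‖) * ‖b‖ + ‖b‖ ^ 2) := by
  have hs₀ : 0 ≤ s := hs.1
  have hs₁ : s ≤ 1 := hs.2
  have hb : ‖(s * (1 - s)) • b‖ ≤ s * ‖b‖ := by
    rw [norm_smul_of_nonneg (mul_nonneg hs₀ (sub_nonneg.2 hs₁))]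
    gcongr
    exact mul_le_of_le_one_right hs₀ (sub_le_self 1 hs₀)
  have hs_sq : s ^ 2 ≤ s := pow_le_of_le_one hs₀ hs₁ two_ne_zero
  calc ‖quadInterp x y b s‖ ^ 2
      ≤ (‖(1 - s) • x + s • y‖ + s * ‖b‖) ^ 2 := by
        gcongr
        exact norm_sub_le_of_le le_rfl hb
    _ = ‖(1 - s) • x + s • y‖ ^ 2 + (s * (2 * ‖(1 - s) • x + s • y‖ * ‖b‖) + s ^ 2 * ‖b‖ ^ 2) := by
        ring
    _ ≤ ((1 - s) * ‖x‖ ^ 2 + s * ‖y‖ ^ 2) +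
          (s * (2 * (‖x‖ + ‖y - x‖) * ‖b‖) + s * ‖b‖ ^ 2) := by
        gcongr
        · exact norm_segment_sq_le x y hs
        · exact norm_segment_le_norm_add_norm_sub x y hs
    _ = _ := by ring

end Norm

lemma two_mul_add_mul_add_sq_le {C₀ D r d β : ℝ} (hC₀ : 0 ≤ C₀) (hr : 0 ≤ r) (hd : 0 ≤ d)
    (hβ : 0 ≤ β) (hdD : d ≤ D) (hβD : β ≤ C₀ * D ^ 2) :
    2 * (r + d) * β + β ^ 2 ≤ (C₀ + 1) ^ 2 * (r * D ^ 2 + D ^ 3 + D ^ 4) := by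
  have hD : 0 ≤ D := hd.trans hdD
  have h_linear : 2 * C₀ ≤ (C₀ + 1) ^ 2 := by linarith [sq_nonneg C₀, add_sq C₀ 1]
  have h_sq : C₀ ^ 2 ≤ (C₀ + 1) ^ 2 := by gcongr; exact le_add_of_nonneg_right zero_le_one
  calc 2 * (r + d) * β + β ^ 2
      ≤ 2 * (r + D) * (C₀ * D ^ 2) + (C₀ * D ^ 2) ^ 2 := by gcongr
    _ = 2 * C₀ * (r * D ^ 2 + D ^ 3) + C₀ ^ 2 * D ^ 4 := by ring
    _ ≤ (C₀ + 1) ^ 2 * (r * D ^ 2 + D ^ 3) + (C₀ + 1) ^ 2 * D ^ 4 := by gcongr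
    _ = (C₀ + 1) ^ 2 * (r * D ^ 2 + D ^ 3 + D ^ 4) := by ring

theorem stmt13_general {E : Type*} [SeminormedAddCommGroup E] [NormedSpace ℝ E]
    (C₀ : ℝ) (hC₀ : 0 ≤ C₀) :
    ∃ C : ℝ, 0 < C ∧
      ∀ (D M : ℝ) (g₀ g₁ b : E), ‖g₁ - g₀‖ ≤ D → ‖b‖ ≤ C₀ * D ^ 2 → ‖g₀‖ ^ 2 ≤ M →
      ∀ s ∈ Set.Icc (0 : ℝ) 1,
        ‖quadInterp g₀ g₁ b s - g₀‖ ^ 2 ≤ s ^ 2 * (‖g₁ - g₀‖ ^ 2 + C * D ^ 3 + C * D ^ 4) ∧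
        ‖quadInterp g₀ g₁ b s‖ ^ 2 ≤ (1 - s) * ‖g₀‖ ^ 2 + s * ‖g₁‖ ^ 2 +
          C * s * (Real.sqrt M * D ^ 2 + D ^ 3 + D ^ 4) := by
  refine ⟨(C₀ + 1) ^ 2, by positivity, fun D M g₀ g₁ b hD hb hM s hs ↦ ⟨?_, ?_⟩⟩
  · have h_error := two_mul_add_mul_add_sq_le hC₀ le_rfl (norm_nonneg _) (norm_nonneg b) hD hb
    calc ‖quadInterp g₀ g₁ b s - g₀‖ ^ 2
        ≤ (s * (‖g₁ - g₀‖ + ‖b‖)) ^ 2 := by gcongr; exact norm_quadInterp_sub_left_le g₀ g₁ b hs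
      _ = s ^ 2 * (‖g₁ - g₀‖ ^ 2 + (2 * (0 + ‖g₁ - g₀‖) * ‖b‖ + ‖b‖ ^ 2)) := by ring
      _ ≤ s ^ 2 * (‖g₁ - g₀‖ ^ 2 + (C₀ + 1) ^ 2 * (0 * D ^ 2 + D ^ 3 + D ^ 4)) := by gcongr
      _ = _ := by ring
  · have h_error := two_mul_add_mul_add_sq_le hC₀ (norm_nonneg g₀) (norm_nonneg _)
      (norm_nonneg b) hD hb
    have hs₀ : 0 ≤ s := hs.1
    calc ‖quadInterp g₀ g₁ b s‖ ^ 2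
        ≤ (1 - s) * ‖g₀‖ ^ 2 + s * ‖g₁‖ ^ 2 +
            s * (2 * (‖g₀‖ + ‖g₁ - g₀‖) * ‖b‖ + ‖b‖ ^ 2) := norm_quadInterp_sq_le g₀ g₁ b hs
      _ ≤ (1 - s) * ‖g₀‖ ^ 2 + s * ‖g₁‖ ^ 2 +
            s * ((C₀ + 1) ^ 2 * (Real.sqrt M * D ^ 2 + D ^ 3 + D ^ 4)) := by
        gcongr
        refine h_error.trans ?_
        gcongr
        exact Real.le_sqrt_of_sq_le hM
      _ = _ := by ring

/-- Quantitative estimates along generalized geodesics: for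
`g_s := (1−s)g₀ + s g₁ − s(1−s) b` with `‖g₁−g₀‖ ≤ D`, `‖b‖ ≤ C₀ D²`, `‖g₀‖² ≤ M`,
there is a constant `C > 0` depending only on `C₀` such that for all `s ∈ [0,1]`:
`‖g_s − g₀‖² ≤ s²(‖g₁−g₀‖² + C D³ + C D⁴)` and
`‖g_s‖² ≤ (1−s)‖g₀‖² + s‖g₁‖² + C s (√M D² + D³ + D⁴)`. -/
theorem stmt13 {H : Type*} [NormedAddCommGroup H] [InnerProductSpace ℝ H]
    (C₀ : ℝ) (hC₀ : 0 ≤ C₀) :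
    ∃ C : ℝ, 0 < C ∧
      ∀ (D M : ℝ), 0 ≤ D → 0 ≤ M →
      ∀ g₀ g₁ b : H, ‖g₁ - g₀‖ ≤ D → ‖b‖ ≤ C₀ * D ^ 2 → ‖g₀‖ ^ 2 ≤ M →
      ∀ s ∈ Set.Icc (0:ℝ) 1,
        ‖((1 - s) • g₀ + s • g₁ - (s * (1 - s)) • b) - g₀‖ ^ 2 ≤
          s ^ 2 * (‖g₁ - g₀‖ ^ 2 + C * D ^ 3 + C * D ^ 4) ∧
        ‖(1 - s) • g₀ + s • g₁ - (s * (1 - s)) • b‖ ^ 2 ≤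
          (1 - s) * ‖g₀‖ ^ 2 + s * ‖g₁‖ ^ 2 +
            C * s * (Real.sqrt M * D ^ 2 + D ^ 3 + D ^ 4) := by
  obtain ⟨C, hC, h⟩ := stmt13_general (E := H) C₀ hC₀
  exact ⟨C, hC, fun D M _ _ ↦ h D M⟩
end
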